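/- arXiv:1903.05863 — 2 statements merged into one kernel-verified Lean document; each statement's English description precedes it below -/
import Mathlib

section
/- Let H ∈ (0,1/2). For all s, t > 0, ∫_0^{min(s,t)} K_H(t,u) K_H(s,u) du = (1/2) ( t^{2H} + s^{2H} − |t − s|^{2H} ). -/
open MeasureTheory intervalIntegral

/-- The normalizing constant `c_H = √(2H / ((1-2H) B(1-2H, H+1/2)))`, where the Beta function is
expressed via Gamma functions: `B(a,b) = Γ(a)Γ(b)/Γ(a+b)`. -/
noncomputable def cH (H : ℝ) : ℝ :=
  Real.sqrt (2 * H /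
    ((1 - 2 * H) * (Real.Gamma (1 - 2 * H) * Real.Gamma (H + 1 / 2) /
      Real.Gamma ((1 - 2 * H) + (H + 1 / 2)))))

/-- The fractional Brownian kernel
`K_H(t,s) = c_H [ (t/s)^{H-1/2}(t-s)^{H-1/2} + (1/2-H) s^{1/2-H} ∫_s^t u^{H-3/2}(u-s)^{H-1/2} du ]`. -/
noncomputable def KH (H t s : ℝ) : ℝ :=
  cH H * ((t / s) ^ (H - 1 / 2) * (t - s) ^ (H - 1 / 2) +
    (1 / 2 - H) * s ^ (1 / 2 - H) * ∫ u in s..t, u ^ (H - 3 / 2) * (u - s) ^ (H - 1 / 2))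

/-!
Write `α = 1/2 - H` and `k_t(u) = K_H(t, u) / (c_H u ^ α)`. Up to constants, the right fractional
integral of order `α` of `k_s` is `y ^ (-α)`, while `u ^ (2α) k_t(u)` is the left fractional
integral of order `α` of `y ^ (-α) + y ^ α (t - y) ^ (-2α)`. Fractional integration by parts
therefore turns `∫₀ˢ K_H(t, u) K_H(s, u) du`, for `s ≤ t`, into a multiple of
`∫₀ˢ (y ^ (2H - 1) + (t - y) ^ (2H - 1)) dy`. With values in `ℝ≥0∞`, Tonelli's theorem justifies
every exchange of integrals without integrability conditions.
-/

namespace FractionalKernel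

open Set Filter Topology ProbabilityTheory
open scoped ENNReal

section Substitution

lemma inv_Ioo₀ {G₀ : Type*} [GroupWithZero G₀] [LinearOrder G₀] [PosMulReflectLT G₀]
    [MulPosReflectLT G₀] {a b : G₀} (ha : 0 < a) (hb : 0 < b) : (Ioo a b)⁻¹ = Ioo b⁻¹ a⁻¹ := by
  have hinter : Ioo a b = Ioi a ∩ Ioo 0 b := by rw [inter_comm, Ioo_inter_Ioi, max_eq_right ha.le]
  rw [hinter, inter_inv, inv_Ioi₀ ha, inv_Ioo_0_left hb, Ioo_inter_Ioi,
    max_eq_right (inv_pos.2 hb).le]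

lemma setLIntegral_inv {s : Set ℝ} (hs : MeasurableSet s) (h0 : 0 ∉ s) (f : ℝ → ℝ≥0∞) :
    ∫⁻ x in s⁻¹, f x = ∫⁻ x in s, ENNReal.ofReal ((x ^ 2)⁻¹) * f x⁻¹ := by
  have hderiv : ∀ x ∈ s, HasDerivWithinAt Inv.inv (-(x ^ 2)⁻¹) s x := fun x hx =>
    (hasDerivAt_inv (ne_of_mem_of_not_mem hx h0)).hasDerivWithinAt
  rw [← image_inv_eq_inv, lintegral_image_eq_lintegral_abs_deriv_mul hs hderiv inv_injective.injOn]
  simp only [abs_neg, abs_inv, abs_sq]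

lemma lintegral_Ioo_comp_sub_left (a b c : ℝ) (f : ℝ → ℝ≥0∞) :
    ∫⁻ x in Ioo a b, f (c - x) = ∫⁻ x in Ioo (c - b) (c - a), f x := by
  have hpreimage := (volume.measurePreserving_sub_left c).setLIntegral_comp_preimage_emb
    (MeasurableEquiv.subLeft c).measurableEmbedding f (Ioo (c - b) (c - a))
  rwa [preimage_const_sub_Ioo, sub_sub_cancel, sub_sub_cancel] at hpreimage

end Substitution

section Tonelli

variable {X : Type*} [TopologicalSpace X] [LinearOrder X] [OrderClosedTopology X]
  [SecondCountableTopology X] [MeasurableSpace X] [OpensMeasurableSpace X]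

lemma lintegral_Ioo_lintegral_Ioo_swap {μ ν : Measure X} [SFinite μ] [SFinite ν] {a b : X}
    {F : X → X → ℝ≥0∞} (hF : Measurable (Function.uncurry F)) :
    ∫⁻ x in Ioo a b, ∫⁻ y in Ioo a x, F x y ∂ν ∂μ =
      ∫⁻ y in Ioo a b, ∫⁻ x in Ioo y b, F x y ∂μ ∂ν := by
  set G : X → X → ℝ≥0∞ := fun x y => {z : X × X | z.2 < z.1}.indicator (Function.uncurry F) (x, y)
  have hG : Measurable (Function.uncurry G) :=
    hF.indicator (measurableSet_lt measurable_snd measurable_fst)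
  calc ∫⁻ x in Ioo a b, ∫⁻ y in Ioo a x, F x y ∂ν ∂μ
      = ∫⁻ x in Ioo a b, ∫⁻ y in Ioo a b, G x y ∂ν ∂μ := by
        refine setLIntegral_congr_fun measurableSet_Ioo fun x hx => ?_
        rw [← lintegral_indicator measurableSet_Ioo, ← lintegral_indicator measurableSet_Ioo]
        refine lintegral_congr fun y => ?_
        simp only [G, indicator, mem_Ioo, mem_ofPred_eq, Function.uncurry_apply_pair] at hx ⊢
        grind
    _ = ∫⁻ y in Ioo a b, ∫⁻ x in Ioo a b, G x y ∂μ ∂ν := lintegral_lintegral_swap hG.aemeasurable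
    _ = ∫⁻ y in Ioo a b, ∫⁻ x in Ioo y b, F x y ∂μ ∂ν := by
        refine setLIntegral_congr_fun measurableSet_Ioo fun y hy => ?_
        rw [← lintegral_indicator measurableSet_Ioo, ← lintegral_indicator measurableSet_Ioo]
        refine lintegral_congr fun x => ?_
        simp only [G, indicator, mem_Ioo, mem_ofPred_eq, Function.uncurry_apply_pair] at hy ⊢
        grind

end Tonelli

section PowerIntegrals

variable {a b p q r s t u : ℝ}

lemma lintegral_Ioi_of_hasDerivAt_neg {g g' : ℝ → ℝ} {l : ℝ}
    (hderiv : ∀ x ∈ Ici a, HasDerivAt g (-g' x) x) (hpos : ∀ x ∈ Ioi a, 0 ≤ g' x)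
    (hlim : Tendsto g atTop (𝓝 l)) :
    ∫⁻ x in Ioi a, ENNReal.ofReal (g' x) = ENNReal.ofReal (g a - l) := by
  have hneg : ∀ x ∈ Ioi a, -g' x ≤ 0 := fun x hx => neg_nonpos.2 (hpos x hx)
  have hint : IntegrableOn g' (Ioi a) := by
    simpa using (integrableOn_Ioi_deriv_of_nonpos' hderiv hneg hlim).neg
  rw [← ofReal_integral_eq_lintegral_ofReal hint
    (ae_restrict_of_forall_mem measurableSet_Ioi hpos), ← neg_sub l, ←
    integral_Ioi_of_hasDerivAt_of_nonpos' hderiv hneg hlim, MeasureTheory.integral_neg, neg_neg]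

lemma lintegral_Ioi_sub_rpow (hab : a < b) (hr : r < -1) :
    ∫⁻ x in Ioi b, ENNReal.ofReal ((x - a) ^ r) =
      ENNReal.ofReal ((b - a) ^ (r + 1) / -(r + 1)) := by
  have hr1 : 0 < -(r + 1) := by linarith
  have hderiv : ∀ x ∈ Ici b,
      HasDerivAt (fun x => (x - a) ^ (r + 1) / -(r + 1)) (-(x - a) ^ r) x := by
    intro x hx
    have hxa : x - a ≠ 0 := (sub_pos.2 (hab.trans_le hx)).ne'
    convert! (((hasDerivAt_id x).sub_const a).rpow_const (p := r + 1) (.inl hxa)).div_const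
      (-(r + 1)) using 1
    rw [id, add_sub_cancel_right, one_mul, div_neg, mul_div_assoc, mul_comm,
      div_mul_cancel₀ _ (by linarith)]
  have hlim : Tendsto (fun x => (x - a) ^ (r + 1) / -(r + 1)) atTop (𝓝 0) := by
    simpa [sub_eq_add_neg] using ((tendsto_rpow_neg_atTop hr1).comp
      (tendsto_atTop_add_const_right atTop (-a) tendsto_id)).div_const (-(r + 1))
  rw [lintegral_Ioi_of_hasDerivAt_neg hderiv
    (fun x hx => Real.rpow_nonneg (sub_pos.2 (hab.trans hx)).le r) hlim, sub_zero]

lemma lintegral_Ioo_rpow (ha : 0 ≤ a) (hab : a ≤ b) (hr : -1 < r ∨ r ≠ -1 ∧ 0 < a) :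
    ∫⁻ x in Ioo a b, ENNReal.ofReal (x ^ r) =
      ENNReal.ofReal ((b ^ (r + 1) - a ^ (r + 1)) / (r + 1)) := by
  have h0 (h : 0 < a) : (0 : ℝ) ∉ uIcc a b := notMem_uIcc_of_lt h (h.trans_le hab)
  have hint : IntervalIntegrable (fun x : ℝ => x ^ r) volume a b :=
    hr.elim intervalIntegrable_rpow' fun h => intervalIntegrable_rpow (.inr (h0 h.2))
  rw [← integral_rpow (hr.imp_right (And.imp_right h0)), integral_of_le hab,
    integral_Ioc_eq_integral_Ioo, ofReal_integral_eq_lintegral_ofReal]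
  · exact (intervalIntegrable_iff_integrableOn_Ioo_of_le hab).1 hint
  · exact ae_restrict_of_forall_mem measurableSet_Ioo fun x hx =>
      Real.rpow_nonneg (ha.trans hx.1.le) r

lemma lintegral_Ioo_rpow_add_sub_rpow (hr : -1 < r) (hs : 0 ≤ s) (hst : s ≤ t) :
    ∫⁻ y in Ioo 0 s, (ENNReal.ofReal (y ^ r) + ENNReal.ofReal ((t - y) ^ r)) =
      ENNReal.ofReal ((t ^ (r + 1) + s ^ (r + 1) - (t - s) ^ (r + 1)) / (r + 1)) := by
  have hr1 : 0 < r + 1 := by linarith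
  have hle : (t - s) ^ (r + 1) ≤ t ^ (r + 1) :=
    Real.rpow_le_rpow (sub_nonneg.2 hst) (by linarith) hr1.le
  rw [lintegral_add_left (by fun_prop), lintegral_Ioo_rpow le_rfl hs (.inl hr),
    lintegral_Ioo_comp_sub_left 0 s t fun y => ENNReal.ofReal (y ^ r), sub_zero,
    lintegral_Ioo_rpow (sub_nonneg.2 hst) (by linarith) (.inl hr), Real.zero_rpow hr1.ne', sub_zero,
    ← ENNReal.ofReal_add (by positivity) (div_nonneg (sub_nonneg.2 hle) hr1.le), ← add_div]
  ring_nf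

lemma ofReal_rpow_neg_mul_sub_rpow_neg_eq_lintegral_Ioi (hp : 0 < p) (hq : 0 < q) (ht : 0 < t)
    (hut : u < t) :
    ENNReal.ofReal (t ^ (-p) * (t - u) ^ (-q)) =
      ENNReal.ofReal p * (∫⁻ v in Ioi t, ENNReal.ofReal (v ^ (-p - 1) * (v - u) ^ (-q))) +
        ENNReal.ofReal q * ∫⁻ v in Ioi t, ENNReal.ofReal (v ^ (-p) * (v - u) ^ (-q - 1)) := by
  have hpos : ∀ v ∈ Ici t, 0 < v ∧ 0 < v - u := fun v hv =>
    ⟨ht.trans_le hv, sub_pos.2 (hut.trans_le hv)⟩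
  have hderiv : ∀ v ∈ Ici t, HasDerivAt (fun v => v ^ (-p) * (v - u) ^ (-q))
      (-(p * (v ^ (-p - 1) * (v - u) ^ (-q)) + q * (v ^ (-p) * (v - u) ^ (-q - 1)))) v := by
    intro v hv
    obtain ⟨hv0, hvu⟩ := hpos v hv
    convert! ((hasDerivAt_id v).rpow_const (.inl hv0.ne')).mul
      (((hasDerivAt_id v).sub_const u).rpow_const (.inl hvu.ne')) using 1
    simp only [id]
    ring
  have hnonneg : ∀ v ∈ Ioi t,
      0 ≤ p * (v ^ (-p - 1) * (v - u) ^ (-q)) + q * (v ^ (-p) * (v - u) ^ (-q - 1)) := by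
    intro v hv
    obtain ⟨hv0, hvu⟩ := hpos v (Ioi_subset_Ici_self hv)
    positivity
  have hlim : Tendsto (fun v : ℝ => v ^ (-p) * (v - u) ^ (-q)) atTop (𝓝 0) := by
    simpa [sub_eq_add_neg] using (tendsto_rpow_neg_atTop hp).mul ((tendsto_rpow_neg_atTop hq).comp
      (tendsto_atTop_add_const_right atTop (-u) tendsto_id))
  rw [← sub_zero (t ^ (-p) * (t - u) ^ (-q)),
    ← lintegral_Ioi_of_hasDerivAt_neg hderiv hnonneg hlim,
    ← lintegral_const_mul' _ _ ENNReal.ofReal_ne_top,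
    ← lintegral_const_mul' _ _ ENNReal.ofReal_ne_top, ← lintegral_add_left (by fun_prop)]
  refine setLIntegral_congr_fun measurableSet_Ioi fun v hv => ?_
  obtain ⟨hv0, hvu⟩ := hpos v (Ioi_subset_Ici_self hv)
  rw [ENNReal.ofReal_add (by positivity) (by positivity), ENNReal.ofReal_mul hp.le,
    ENNReal.ofReal_mul hq.le]

end PowerIntegrals

section Beta

variable {a b p q α : ℝ}

lemma beta_comm (p q : ℝ) : beta p q = beta q p := by
  rw [beta, beta, mul_comm, add_comm]

lemma beta_one_right (hp : 0 < p) : beta p 1 = 1 / p := by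
  rw [beta, Real.Gamma_one, mul_one, Real.Gamma_add_one hp.ne', mul_comm p, div_mul_cancel_left₀
    (Real.Gamma_pos_of_pos hp).ne', one_div]

lemma beta_mul_beta_add {x y z : ℝ} (hxy : 0 < x + y) (hyz : 0 < y + z) :
    beta x y * beta (x + y) z = beta y z * beta x (y + z) := by
  simp only [beta, ← add_assoc]
  field_simp [(Real.Gamma_pos_of_pos hxy).ne', (Real.Gamma_pos_of_pos hyz).ne']

lemma two_mul_beta_mul_beta_add_one (hα : 0 < α) :
    2 * α * beta (2 * α) (1 - α) * beta (α + 1) α = beta (1 - α) α := by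
  have hassoc := beta_mul_beta_add (show 0 < 2 * α + (1 - α) by linarith)
    (show 0 < 1 - α + α by linarith)
  rw [sub_add_cancel, beta_one_right (by positivity), show 2 * α + (1 - α) = α + 1 by ring]
    at hassoc
  rw [mul_assoc, hassoc]
  field_simp

lemma lintegral_Ioo_zero_one_beta (hp : 0 < p) (hq : 0 < q) :
    ∫⁻ x in Ioo (0 : ℝ) 1, ENNReal.ofReal (x ^ (p - 1) * (1 - x) ^ (q - 1)) =
      ENNReal.ofReal (beta p q) := by
  have hB := beta_pos hp hq
  have hpdf := lintegral_betaPDF_eq_one hp hq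
  simp_rw [lintegral_betaPDF, mul_assoc, ENNReal.ofReal_mul (one_div_pos.2 hB).le, one_div,
    ENNReal.ofReal_inv_of_pos hB] at hpdf
  rw [lintegral_const_mul' _ _ (by simpa using hB), ← ENNReal.div_eq_inv_mul] at hpdf
  exact (ENNReal.div_eq_one_iff (by simpa using hB) ENNReal.ofReal_ne_top).1 hpdf

lemma lintegral_Ioo_beta (hp : 0 < p) (hq : 0 < q) (hab : a < b) :
    ∫⁻ x in Ioo a b, ENNReal.ofReal ((x - a) ^ (p - 1) * (b - x) ^ (q - 1)) =
      ENNReal.ofReal (beta p q * (b - a) ^ (p + q - 1)) := by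
  have hba : 0 < b - a := sub_pos.2 hab
  have himage : (fun x => (b - a) * x + a) '' Ioo 0 1 = Ioo a b := by
    simp [image_affine_Ioo hba]
  have hderiv : ∀ x ∈ Ioo (0 : ℝ) 1,
      HasDerivWithinAt (fun x => (b - a) * x + a) (b - a) (Ioo 0 1) x := fun x _ => by
    simpa using (((hasDerivAt_id x).const_mul (b - a)).add_const a).hasDerivWithinAt
  have hinj : InjOn (fun x => (b - a) * x + a) (Ioo 0 1) := fun x _ y _ h => by
    simpa [hba.ne'] using h
  rw [← himage, lintegral_image_eq_lintegral_abs_deriv_mul measurableSet_Ioo hderiv hinj,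
    mul_comm (beta p q), ENNReal.ofReal_mul (by positivity), ← lintegral_Ioo_zero_one_beta hp hq,
    ← lintegral_const_mul' _ _ ENNReal.ofReal_ne_top]
  refine setLIntegral_congr_fun measurableSet_Ioo fun x hx => ?_
  rw [← ENNReal.ofReal_mul (abs_nonneg _), ← ENNReal.ofReal_mul (by positivity), abs_of_pos hba,
    add_sub_cancel_right, show b - ((b - a) * x + a) = (b - a) * (1 - x) by ring,
    Real.mul_rpow hba.le hx.1.le, Real.mul_rpow hba.le (sub_pos.2 hx.2).le,
    show p + q - 1 = (p - 1) + (q - 1) + 1 by ring, Real.rpow_add_one hba.ne', Real.rpow_add hba]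
  ring_nf

lemma lintegral_Ioi_beta (hp : 0 < p) (hq : 0 < q) (ha : 0 < a) :
    ∫⁻ x in Ioi a, ENNReal.ofReal ((x - a) ^ (q - 1) * x ^ (-p - q)) =
      ENNReal.ofReal (beta p q * a ^ (-p)) := by
  have ha' : 0 < a⁻¹ := inv_pos.2 ha
  have hconst : beta p q * a ^ (-p) =
      a ^ (q - 1) * (beta p q * (a⁻¹ - 0) ^ (p + q - 1)) := by
    rw [sub_zero, Real.inv_rpow ha.le, ← Real.rpow_neg ha.le, mul_left_comm, ← Real.rpow_add ha]
    ring_nf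
  rw [← inv_inv a, ← inv_Ioo_0_left ha', inv_inv, setLIntegral_inv measurableSet_Ioo (by simp),
    hconst, ENNReal.ofReal_mul (by positivity), ← lintegral_Ioo_beta hp hq ha',
    ← lintegral_const_mul' _ _ ENNReal.ofReal_ne_top]
  refine setLIntegral_congr_fun measurableSet_Ioo fun x hx => ?_
  have hx0 : 0 < x := hx.1
  have hxa : 0 < a⁻¹ - x := sub_pos.2 hx.2
  rw [← ENNReal.ofReal_mul (by positivity), ← ENNReal.ofReal_mul (by positivity),
    show x⁻¹ - a = a * (a⁻¹ - x) / x by field_simp, Real.div_rpow (by positivity) hx0.le,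
    Real.mul_rpow ha.le hxa.le, Real.inv_rpow hx0.le, sub_zero, ← Real.rpow_neg hx0.le,
    show -(-p - q) = (p - 1) + (q - 1) + (2 : ℕ) by push_cast; ring, Real.rpow_add_natCast hx0.ne',
    Real.rpow_add hx0]
  congr 1
  field_simp

lemma lintegral_Ioo_beta_mul_rpow (hp : 0 < p) (hq : 0 < q) (ha : 0 < a) (hab : a < b) :
    ∫⁻ x in Ioo a b, ENNReal.ofReal ((b - x) ^ (p - 1) * (x - a) ^ (q - 1) * x ^ (-p - q)) =
      ENNReal.ofReal (beta p q * (b - a) ^ (p + q - 1) * a ^ (-p) * b ^ (-q)) := by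
  have hb : 0 < b := ha.trans hab
  have hab' : b⁻¹ < a⁻¹ := inv_strictAnti₀ ha hab
  have hconst : beta p q * (b - a) ^ (p + q - 1) * a ^ (-p) * b ^ (-q) =
      b ^ (p - 1) * a ^ (q - 1) * (beta p q * (a⁻¹ - b⁻¹) ^ (p + q - 1)) := by
    have hexp : -q = (p - 1) - (p + q - 1) ∧ -p = (q - 1) - (p + q - 1) := by constructor <;> ring
    rw [inv_sub_inv ha.ne' hb.ne', Real.div_rpow (sub_pos.2 hab).le (by positivity),
      Real.mul_rpow ha.le hb.le, hexp.1, hexp.2, Real.rpow_sub hb, Real.rpow_sub ha]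
    field_simp
  rw [← inv_inv (Ioo a b), inv_Ioo₀ ha hb,
    setLIntegral_inv measurableSet_Ioo fun h => (inv_pos.2 hb).not_gt h.1, hconst,
    ENNReal.ofReal_mul (by positivity), ← lintegral_Ioo_beta hp hq hab',
    ← lintegral_const_mul' _ _ ENNReal.ofReal_ne_top]
  refine setLIntegral_congr_fun measurableSet_Ioo fun x hx => ?_
  have hx0 : 0 < x := (inv_pos.2 hb).trans hx.1
  have hxa : 0 < a⁻¹ - x := sub_pos.2 hx.2
  have hxb : 0 < x - b⁻¹ := sub_pos.2 hx.1
  rw [← ENNReal.ofReal_mul (by positivity), ← ENNReal.ofReal_mul (by positivity),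
    show x⁻¹ - a = a * (a⁻¹ - x) / x by field_simp,
    show b - x⁻¹ = b * (x - b⁻¹) / x by field_simp, Real.div_rpow (by positivity) hx0.le,
    Real.div_rpow (by positivity) hx0.le, Real.mul_rpow ha.le hxa.le, Real.mul_rpow hb.le hxb.le,
    Real.inv_rpow hx0.le, ← Real.rpow_neg hx0.le,
    show -(-p - q) = (p - 1) + (q - 1) + (2 : ℕ) by push_cast; ring, Real.rpow_add_natCast hx0.ne',
    Real.rpow_add hx0]
  congr 1
  field_simp

end Beta

/-- The left Riemann–Liouville fractional integral of order `α` based at `a`, without the usual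
factor `1 / Γ(α)`, of an extended nonnegative function. -/
noncomputable def leftFracIntegral (a α : ℝ) (f : ℝ → ℝ≥0∞) (x : ℝ) : ℝ≥0∞ :=
  ∫⁻ y in Ioo a x, ENNReal.ofReal ((x - y) ^ (α - 1)) * f y

/-- The right Riemann–Liouville fractional integral of order `α` based at `b`, without the usual
factor `1 / Γ(α)`, of an extended nonnegative function. -/
noncomputable def rightFracIntegral (b α : ℝ) (f : ℝ → ℝ≥0∞) (x : ℝ) : ℝ≥0∞ :=
  ∫⁻ y in Ioo x b, ENNReal.ofReal ((y - x) ^ (α - 1)) * f y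

section FractionalIntegrals

variable {a b x α β p t v : ℝ} {f g : ℝ → ℝ≥0∞}

lemma leftFracIntegral_add (hf : Measurable f) :
    leftFracIntegral a α (fun y => f y + g y) x =
      leftFracIntegral a α f x + leftFracIntegral a α g x := by
  simp only [leftFracIntegral, mul_add]
  exact lintegral_add_left (by fun_prop) _

lemma leftFracIntegral_const_mul (hf : Measurable f) (c : ℝ≥0∞) :
    leftFracIntegral a α (fun y => c * f y) x = c * leftFracIntegral a α f x := by
  simp only [leftFracIntegral, mul_left_comm _ c]
  exact lintegral_const_mul c (by fun_prop)

lemma rightFracIntegral_add (hf : Measurable f) :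
    rightFracIntegral b α (fun y => f y + g y) x =
      rightFracIntegral b α f x + rightFracIntegral b α g x := by
  simp only [rightFracIntegral, mul_add]
  exact lintegral_add_left (by fun_prop) _

lemma rightFracIntegral_const_mul (hf : Measurable f) (c : ℝ≥0∞) :
    rightFracIntegral b α (fun y => c * f y) x = c * rightFracIntegral b α f x := by
  simp only [rightFracIntegral, mul_left_comm _ c]
  exact lintegral_const_mul c (by fun_prop)

lemma rightFracIntegral_one : rightFracIntegral b 1 f x = ∫⁻ y in Ioo x b, f y := by
  simp [rightFracIntegral]

lemma measurable_rightFracIntegral (b α : ℝ) (hf : Measurable f) :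
    Measurable (rightFracIntegral b α f) := by
  have hindicator : rightFracIntegral b α f = fun x => ∫⁻ y,
      {z : ℝ × ℝ | z.1 < z.2 ∧ z.2 < b}.indicator
        (fun z => ENNReal.ofReal ((z.2 - z.1) ^ (α - 1)) * f z.2) (x, y) := by
    ext x
    rw [rightFracIntegral, ← lintegral_indicator measurableSet_Ioo]
    rfl
  rw [hindicator]
  exact (Measurable.indicator (by fun_prop) ((measurableSet_lt measurable_fst measurable_snd).inter
    (measurableSet_lt measurable_snd measurable_const))).lintegral_prod_right'

lemma leftFracIntegral_lintegral {Ω : Type*} [MeasurableSpace Ω] {μ : Measure Ω} [SFinite μ]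
    {F : Ω → ℝ → ℝ≥0∞} (hF : Measurable (Function.uncurry F)) :
    leftFracIntegral a α (fun y => ∫⁻ ω, F ω y ∂μ) x = ∫⁻ ω, leftFracIntegral a α (F ω) x ∂μ := by
  have hmeas : Measurable (Function.uncurry fun y ω =>
      ENNReal.ofReal ((x - y) ^ (α - 1)) * F ω y) :=
    .mul (by fun_prop) (hF.comp measurable_swap)
  simp only [leftFracIntegral, ← lintegral_const_mul' _ _ ENNReal.ofReal_ne_top]
  exact lintegral_lintegral_swap hmeas.aemeasurable

lemma lintegral_mul_leftFracIntegral (hf : Measurable f) (hg : Measurable g) :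
    ∫⁻ x in Ioo a b, f x * leftFracIntegral a α g x =
      ∫⁻ y in Ioo a b, rightFracIntegral b α f y * g y := by
  calc ∫⁻ x in Ioo a b, f x * leftFracIntegral a α g x
      = ∫⁻ x in Ioo a b, ∫⁻ y in Ioo a x,
          f x * (ENNReal.ofReal ((x - y) ^ (α - 1)) * g y) := by
        simp only [leftFracIntegral]
        exact lintegral_congr fun x => (lintegral_const_mul _ (by fun_prop)).symm
    _ = ∫⁻ y in Ioo a b, ∫⁻ x in Ioo y b,
          f x * (ENNReal.ofReal ((x - y) ^ (α - 1)) * g y) :=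
        lintegral_Ioo_lintegral_Ioo_swap (by unfold Function.uncurry; fun_prop)
    _ = ∫⁻ y in Ioo a b, rightFracIntegral b α f y * g y := by
        refine lintegral_congr fun y => ?_
        rw [rightFracIntegral, ← lintegral_mul_const _ (by fun_prop)]
        exact lintegral_congr fun x => by ring

lemma rightFracIntegral_sub_rpow (hα : 0 < α) (hβ : 0 < β) (hx : x < b) :
    rightFracIntegral b α (fun y => ENNReal.ofReal ((b - y) ^ (β - 1))) x =
      ENNReal.ofReal (beta α β * (b - x) ^ (α + β - 1)) := by
  rw [← lintegral_Ioo_beta hα hβ hx]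
  refine setLIntegral_congr_fun measurableSet_Ioo fun y hy => ?_
  exact (ENNReal.ofReal_mul (Real.rpow_nonneg (sub_pos.2 hy.1).le _)).symm

lemma rightFracIntegral_rightFracIntegral (hα : 0 < α) (hβ : 0 < β) (hf : Measurable f) :
    rightFracIntegral b α (rightFracIntegral b β f) x =
      ENNReal.ofReal (beta α β) * rightFracIntegral b (α + β) f x := by
  have hB := beta_pos hα hβ
  calc rightFracIntegral b α (rightFracIntegral b β f) x
      = ∫⁻ y in Ioo x b, ∫⁻ z in Ioo y b, ENNReal.ofReal ((y - x) ^ (α - 1)) *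
          (ENNReal.ofReal ((z - y) ^ (β - 1)) * f z) := by
        simp only [rightFracIntegral, ← lintegral_const_mul' _ _ ENNReal.ofReal_ne_top]
    _ = ∫⁻ z in Ioo x b, ∫⁻ y in Ioo x z, ENNReal.ofReal ((y - x) ^ (α - 1)) *
          (ENNReal.ofReal ((z - y) ^ (β - 1)) * f z) :=
        (lintegral_Ioo_lintegral_Ioo_swap (by unfold Function.uncurry; fun_prop)).symm
    _ = ∫⁻ z in Ioo x b,
          rightFracIntegral z α (fun y => ENNReal.ofReal ((z - y) ^ (β - 1))) x * f z := by
        refine lintegral_congr fun z => ?_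
        simp only [rightFracIntegral, ← mul_assoc]
        exact lintegral_mul_const _ (by fun_prop)
    _ = ENNReal.ofReal (beta α β) * rightFracIntegral b (α + β) f x := by
        rw [rightFracIntegral, ← lintegral_const_mul' _ _ ENNReal.ofReal_ne_top]
        refine setLIntegral_congr_fun measurableSet_Ioo fun z hz => ?_
        rw [rightFracIntegral_sub_rpow hα hβ hz.1, ENNReal.ofReal_mul hB.le, mul_assoc]

lemma leftFracIntegral_sub_rpow (hα : 0 < α) (hp : 0 < p) (hx : a < x) :
    leftFracIntegral a α (fun y => ENNReal.ofReal ((y - a) ^ (p - 1))) x =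
      ENNReal.ofReal (beta p α * (x - a) ^ (p + α - 1)) := by
  rw [← lintegral_Ioo_beta hp hα hx]
  refine setLIntegral_congr_fun measurableSet_Ioo fun y hy => ?_
  rw [mul_comm, ← ENNReal.ofReal_mul (Real.rpow_nonneg (sub_pos.2 hy.1).le _)]

lemma leftFracIntegral_rpow_mul_sub_rpow (hα : 0 < α) (hp : 0 < p) (hx : 0 < x) (hxv : x < v) :
    leftFracIntegral 0 α (fun y => ENNReal.ofReal (y ^ (p - 1) * (v - y) ^ (-p - α))) x =
      ENNReal.ofReal (beta p α * x ^ (p + α - 1) * (v - x) ^ (-p) * v ^ (-α)) := by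
  have hreflect := lintegral_Ioo_comp_sub_left 0 x v fun z =>
    ENNReal.ofReal ((v - z) ^ (p - 1) * (z - (v - x)) ^ (α - 1) * z ^ (-p - α))
  rw [sub_zero, lintegral_Ioo_beta_mul_rpow hp hα (sub_pos.2 hxv) (sub_lt_self v hx),
    sub_sub_cancel] at hreflect
  rw [← hreflect]
  refine setLIntegral_congr_fun measurableSet_Ioo fun y hy => ?_
  rw [← ENNReal.ofReal_mul (Real.rpow_nonneg (sub_pos.2 hy.2).le _)]
  ring_nf

lemma leftFracIntegral_rpow_mul_sub_rpow_eq_lintegral_Ioi (hα : 0 < α) (hp : 0 < p)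
    (hpα : 1 < p + α) (hx : 0 < x) (hxt : x < t) :
    leftFracIntegral 0 α (fun y => ENNReal.ofReal (y ^ (p - 1) * (t - y) ^ (1 - p - α))) x =
      ENNReal.ofReal ((p + α - 1) * beta p α * x ^ (p + α - 1)) *
        ∫⁻ v in Ioi t, ENNReal.ofReal (v ^ (-α) * (v - x) ^ (-p)) := by
  have hB := beta_pos hp hα
  have hexp : 0 < p + α - 1 := by linarith
  have htail : ∀ y ∈ Ioo 0 x, ENNReal.ofReal (y ^ (p - 1) * (t - y) ^ (1 - p - α)) =
      ∫⁻ v in Ioi t, ENNReal.ofReal (p + α - 1) *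
        ENNReal.ofReal (y ^ (p - 1) * (v - y) ^ (-p - α)) := by
    intro y hy
    have hy0 : 0 ≤ y ^ (p - 1) := Real.rpow_nonneg hy.1.le _
    simp_rw [ENNReal.ofReal_mul hy0, ← mul_assoc, ← ENNReal.ofReal_mul hexp.le]
    rw [lintegral_const_mul' _ _ ENNReal.ofReal_ne_top,
      lintegral_Ioi_sub_rpow (hy.2.trans hxt) (by linarith),
      ← ENNReal.ofReal_mul hy0, ← ENNReal.ofReal_mul (by positivity),
      show -(-p - α + 1) = p + α - 1 by ring, show -p - α + 1 = 1 - p - α by ring]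
    congr 1
    field_simp
  calc leftFracIntegral 0 α (fun y => ENNReal.ofReal (y ^ (p - 1) * (t - y) ^ (1 - p - α))) x
      = leftFracIntegral 0 α (fun y => ∫⁻ v in Ioi t, ENNReal.ofReal (p + α - 1) *
          ENNReal.ofReal (y ^ (p - 1) * (v - y) ^ (-p - α))) x :=
        setLIntegral_congr_fun measurableSet_Ioo fun y hy => by simp only [htail y hy]
    _ = ∫⁻ v in Ioi t, leftFracIntegral 0 α (fun y => ENNReal.ofReal (p + α - 1) *
          ENNReal.ofReal (y ^ (p - 1) * (v - y) ^ (-p - α))) x :=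
        leftFracIntegral_lintegral (by unfold Function.uncurry; fun_prop)
    _ = ∫⁻ v in Ioi t, ENNReal.ofReal ((p + α - 1) * beta p α * x ^ (p + α - 1)) *
          ENNReal.ofReal (v ^ (-α) * (v - x) ^ (-p)) := by
        refine setLIntegral_congr_fun measurableSet_Ioi fun v hv => ?_
        have hxv : x < v := hxt.trans hv
        rw [leftFracIntegral_const_mul (by fun_prop),
          leftFracIntegral_rpow_mul_sub_rpow hα hp hx hxv, ← ENNReal.ofReal_mul hexp.le,
          ← ENNReal.ofReal_mul (by positivity)]
        ring_nf
    _ = _ := lintegral_const_mul' _ _ ENNReal.ofReal_ne_top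

end FractionalIntegrals

/-- The kernel `K_H(t, u) / (c_H u^α)` with `α = 1/2 - H`, as an extended nonnegative real. -/
noncomputable def reducedKernel (α t u : ℝ) : ℝ≥0∞ :=
  ENNReal.ofReal (t ^ (-α) * (t - u) ^ (-α)) +
    ENNReal.ofReal α * rightFracIntegral t (1 - α) (fun w => ENNReal.ofReal (w ^ (-α - 1))) u

@[fun_prop]
lemma measurable_reducedKernel (α t : ℝ) : Measurable (reducedKernel α t) := by
  have hfrac := measurable_rightFracIntegral t (1 - α)
    (f := fun w => ENNReal.ofReal (w ^ (-α - 1))) (by fun_prop)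
  unfold reducedKernel
  fun_prop

section ReducedKernel

variable {α s t u y : ℝ}

lemma rightFracIntegral_add_lintegral_Ioi (hα : 0 < α) (hα1 : α < 1) (hu : 0 < u) (hut : u < t) :
    rightFracIntegral t (1 - α) (fun w => ENNReal.ofReal (w ^ (-α - 1))) u +
        ∫⁻ w in Ioi t, ENNReal.ofReal (w ^ (-α - 1) * (w - u) ^ (-α)) =
      ENNReal.ofReal (beta (2 * α) (1 - α) * u ^ (-(2 * α))) := by
  have hfrac : rightFracIntegral t (1 - α) (fun w => ENNReal.ofReal (w ^ (-α - 1))) u =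
      ∫⁻ w in Ioo u t, ENNReal.ofReal (w ^ (-α - 1) * (w - u) ^ (-α)) := by
    refine setLIntegral_congr_fun measurableSet_Ioo fun w hw => ?_
    rw [ENNReal.ofReal_mul (Real.rpow_nonneg (hu.trans hw.1).le _), mul_comm, sub_sub_cancel_left]
  rw [hfrac, restrict_Ioo_eq_restrict_Ioc,
    ← lintegral_union measurableSet_Ioi (Ioc_disjoint_Ioi le_rfl), Ioc_union_Ioi_eq_Ioi hut.le,
    ← lintegral_Ioi_beta (by positivity) (sub_pos.2 hα1) hu]
  refine lintegral_congr fun w => ?_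
  rw [mul_comm]
  ring_nf

lemma reducedKernel_eq_add_lintegral_Ioi (hα : 0 < α) (hα1 : α < 1) (hu : 0 < u) (hut : u < t) :
    reducedKernel α t u = ENNReal.ofReal (α * beta (2 * α) (1 - α) * u ^ (-(2 * α))) +
      ENNReal.ofReal α * ∫⁻ v in Ioi t, ENNReal.ofReal (v ^ (-α) * (v - u) ^ (-α - 1)) := by
  rw [reducedKernel, ofReal_rpow_neg_mul_sub_rpow_neg_eq_lintegral_Ioi hα hα (hu.trans hut) hut,
    mul_assoc α, ENNReal.ofReal_mul hα.le, ← rightFracIntegral_add_lintegral_Ioi hα hα1 hu hut]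
  ring

lemma rightFracIntegral_reducedKernel (hα : 0 < α) (hα1 : α < 1) (hy : 0 < y) (hys : y < s) :
    rightFracIntegral s α (reducedKernel α s) y =
      ENNReal.ofReal (beta (1 - α) α * y ^ (-α)) := by
  have hα' : 0 < 1 - α := sub_pos.2 hα1
  have hs : 0 < s := hy.trans hys
  have hB := beta_pos hα hα'
  have hle : s ^ (-α) ≤ y ^ (-α) := Real.rpow_le_rpow_of_nonpos hy hys.le (by linarith)
  have hleading : rightFracIntegral s α (fun w => ENNReal.ofReal ((s - w) ^ (-α))) y =
      ENNReal.ofReal (beta α (1 - α)) := by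
    simpa using rightFracIntegral_sub_rpow hα hα' hys
  have hinner : rightFracIntegral s α
      (rightFracIntegral s (1 - α) fun w => ENNReal.ofReal (w ^ (-α - 1))) y =
      ENNReal.ofReal (beta α (1 - α) * ((y ^ (-α) - s ^ (-α)) / α)) := by
    rw [rightFracIntegral_rightFracIntegral hα hα' (by fun_prop), add_sub_cancel,
      rightFracIntegral_one, lintegral_Ioo_rpow hy.le hys.le (.inr ⟨by linarith, hy⟩),
      ← ENNReal.ofReal_mul hB.le, sub_add_cancel, div_neg, ← neg_div, neg_sub]
  have hfrac := measurable_rightFracIntegral s (1 - α)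
    (f := fun w => ENNReal.ofReal (w ^ (-α - 1))) (by fun_prop)
  unfold reducedKernel
  simp_rw [ENNReal.ofReal_mul (Real.rpow_nonneg hs.le _)]
  rw [rightFracIntegral_add (by fun_prop), rightFracIntegral_const_mul (by fun_prop),
    rightFracIntegral_const_mul hfrac, hleading, hinner, ← ENNReal.ofReal_mul (by positivity),
    ← ENNReal.ofReal_mul hα.le, ← ENNReal.ofReal_add (by positivity) (mul_nonneg hα.le
      (mul_nonneg hB.le (div_nonneg (sub_nonneg.2 hle) hα.le))), beta_comm (1 - α)]
  congr 1
  field_simp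
  ring

lemma ofReal_rpow_mul_reducedKernel (hα : 0 < α) (hα1 : α < 1) (hu : 0 < u) (hut : u < t) :
    ENNReal.ofReal (u ^ (2 * α)) * reducedKernel α t u =
      ENNReal.ofReal (α * beta (2 * α) (1 - α) / beta (1 - α) α) *
        leftFracIntegral 0 α
          (fun y => ENNReal.ofReal (y ^ (-α)) +
            ENNReal.ofReal (y ^ α * (t - y) ^ (-(2 * α)))) u := by
  have hα' : 0 < 1 - α := sub_pos.2 hα1
  have hB : 0 < beta (1 - α) α := beta_pos hα' hα
  have hC : 0 < beta (2 * α) (1 - α) := beta_pos (by positivity) hα'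
  have hconst : leftFracIntegral 0 α (fun y => ENNReal.ofReal (y ^ (-α))) u =
      ENNReal.ofReal (beta (1 - α) α) := by
    simpa using leftFracIntegral_sub_rpow hα hα' hu
  have htail := leftFracIntegral_rpow_mul_sub_rpow_eq_lintegral_Ioi hα
    (show 0 < α + 1 by positivity) (by linarith) hu hut
  rw [add_sub_cancel_right, show 1 - (α + 1) - α = -(2 * α) by ring,
    show α + 1 + α - 1 = 2 * α by ring, neg_add'] at htail
  have hconst_coeff : u ^ (2 * α) * (α * beta (2 * α) (1 - α) * u ^ (-(2 * α))) =
      α * beta (2 * α) (1 - α) / beta (1 - α) α * beta (1 - α) α := by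
    rw [Real.rpow_neg hu.le]
    field_simp
  have htail_coeff : u ^ (2 * α) * α =
      α * beta (2 * α) (1 - α) / beta (1 - α) α * (2 * α * beta (α + 1) α * u ^ (2 * α)) := by
    rw [div_mul_eq_mul_div, eq_div_iff hB.ne', ← two_mul_beta_mul_beta_add_one hα]
    ring
  rw [leftFracIntegral_add (by fun_prop), hconst, htail,
    reducedKernel_eq_add_lintegral_Ioi hα hα1 hu hut, mul_add, mul_add, ← mul_assoc, ← mul_assoc,
    ← ENNReal.ofReal_mul (by positivity), ← ENNReal.ofReal_mul (by positivity), hconst_coeff,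
    htail_coeff, ENNReal.ofReal_mul (by positivity), ENNReal.ofReal_mul (by positivity)]

lemma lintegral_rpow_mul_reducedKernel_mul_reducedKernel (hα : 0 < α) (hα1 : α < 1)
    (hst : s ≤ t) :
    ∫⁻ u in Ioo 0 s, ENNReal.ofReal (u ^ (2 * α)) * (reducedKernel α t u * reducedKernel α s u) =
      ENNReal.ofReal (α * beta (2 * α) (1 - α)) *
        ∫⁻ y in Ioo 0 s,
          (ENNReal.ofReal (y ^ (-(2 * α))) + ENNReal.ofReal ((t - y) ^ (-(2 * α)))) := by
  have hα' : 0 < 1 - α := sub_pos.2 hα1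
  have hB : 0 < beta (1 - α) α := beta_pos hα' hα
  have hC : 0 < beta (2 * α) (1 - α) := beta_pos (by positivity) hα'
  set f : ℝ → ℝ≥0∞ := fun y =>
    ENNReal.ofReal (y ^ (-α)) + ENNReal.ofReal (y ^ α * (t - y) ^ (-(2 * α)))
  set c := α * beta (2 * α) (1 - α) / beta (1 - α) α
  have hc : 0 < c := by positivity
  calc ∫⁻ u in Ioo 0 s, ENNReal.ofReal (u ^ (2 * α)) * (reducedKernel α t u * reducedKernel α s u)
      = ∫⁻ u in Ioo 0 s,
          ENNReal.ofReal c * (reducedKernel α s u * leftFracIntegral 0 α f u) := by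
        refine setLIntegral_congr_fun measurableSet_Ioo fun u hu => ?_
        rw [← mul_assoc, ofReal_rpow_mul_reducedKernel hα hα1 hu.1 (hu.2.trans_le hst)]
        ring
    _ = ENNReal.ofReal c * ∫⁻ y in Ioo 0 s, rightFracIntegral s α (reducedKernel α s) y * f y := by
        rw [lintegral_const_mul' _ _ ENNReal.ofReal_ne_top,
          lintegral_mul_leftFracIntegral (by fun_prop) (by fun_prop)]
    _ = ∫⁻ y in Ioo 0 s, ENNReal.ofReal (α * beta (2 * α) (1 - α)) *
          (ENNReal.ofReal (y ^ (-(2 * α))) + ENNReal.ofReal ((t - y) ^ (-(2 * α)))) := by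
        rw [← lintegral_const_mul' _ _ ENNReal.ofReal_ne_top]
        refine setLIntegral_congr_fun measurableSet_Ioo fun y hy => ?_
        have hy0 : 0 < y := hy.1
        have hcB : c * (beta (1 - α) α * y ^ (-α)) = α * beta (2 * α) (1 - α) * y ^ (-α) := by
          rw [← mul_assoc, div_mul_cancel₀ _ hB.ne']
        rw [rightFracIntegral_reducedKernel hα hα1 hy0 hy.2, ← mul_assoc,
          ← ENNReal.ofReal_mul hc.le, hcB, ENNReal.ofReal_mul (by positivity), mul_assoc, mul_add,
          ← ENNReal.ofReal_mul (by positivity), ← ENNReal.ofReal_mul (by positivity), ← mul_assoc,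
          ← Real.rpow_add hy0, ← Real.rpow_add hy0, neg_add_cancel, Real.rpow_zero, one_mul,
          ← neg_add, ← two_mul]
    _ = _ := lintegral_const_mul' _ _ ENNReal.ofReal_ne_top

end ReducedKernel

section FractionalBrownianKernel

variable {H s t u : ℝ}

lemma KH_eq_toReal_reducedKernel (hH : H ∈ Ioo (0 : ℝ) (1 / 2)) (hu : 0 < u) (hut : u < t) :
    KH H t u = cH H * (u ^ (1 / 2 - H) * (reducedKernel (1 / 2 - H) t u).toReal) := by
  have ht : 0 < t := hu.trans hut
  have hα : 0 < 1 / 2 - H := sub_pos.2 hH.2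
  have hfin : rightFracIntegral t (1 - (1 / 2 - H))
      (fun w => ENNReal.ofReal (w ^ (-(1 / 2 - H) - 1))) u ≠ ∞ :=
    ne_top_of_le_ne_top ENNReal.ofReal_ne_top <| le_self_add.trans
      (rightFracIntegral_add_lintegral_Ioi hα (by linarith [hH.1]) hu hut).le
  have hint : ∫ w in u..t, w ^ (H - 3 / 2) * (w - u) ^ (H - 1 / 2) =
      (rightFracIntegral t (1 - (1 / 2 - H))
        (fun w => ENNReal.ofReal (w ^ (-(1 / 2 - H) - 1))) u).toReal := by
    rw [integral_of_le hut.le, integral_Ioc_eq_integral_Ioo,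
      integral_eq_lintegral_of_nonneg_ae ?_ (by fun_prop), rightFracIntegral]
    · congr 1
      refine setLIntegral_congr_fun measurableSet_Ioo fun w hw => ?_
      rw [ENNReal.ofReal_mul (Real.rpow_nonneg (hu.trans hw.1).le _), mul_comm]
      ring_nf
    · exact ae_restrict_of_forall_mem measurableSet_Ioo fun w hw =>
        mul_nonneg (Real.rpow_nonneg (hu.trans hw.1).le _) (Real.rpow_nonneg (sub_pos.2 hw.1).le _)
  rw [KH, hint, reducedKernel, ENNReal.toReal_add ENNReal.ofReal_ne_top
    (ENNReal.mul_ne_top ENNReal.ofReal_ne_top hfin), ENNReal.toReal_mul,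
    ENNReal.toReal_ofReal hα.le, ENNReal.toReal_ofReal
      (mul_nonneg (Real.rpow_nonneg ht.le _) (Real.rpow_nonneg (sub_pos.2 hut).le _)),
    Real.div_rpow ht.le hu.le, ← neg_sub (1 / 2) H, Real.rpow_neg hu.le, div_inv_eq_mul]
  ring

lemma cH_sq (hH : H ∈ Ioo (0 : ℝ) (1 / 2)) :
    cH H ^ 2 = 2 * H / ((1 - 2 * H) * beta (1 - 2 * H) (H + 1 / 2)) := by
  obtain ⟨hH0, hH1⟩ := hH
  have hα : 0 < 1 - 2 * H := by linarith
  have hB : 0 < beta (1 - 2 * H) (H + 1 / 2) := beta_pos hα (by positivity)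
  exact Real.sq_sqrt (by unfold beta at hB; positivity)

lemma lintegral_rpow_mul_reducedKernel_mul_reducedKernel_half_sub (hH : H ∈ Ioo (0 : ℝ) (1 / 2))
    (hs : 0 ≤ s) (hst : s ≤ t) :
    ∫⁻ u in Ioo 0 s, ENNReal.ofReal (u ^ (1 - 2 * H)) *
        (reducedKernel (1 / 2 - H) t u * reducedKernel (1 / 2 - H) s u) =
      ENNReal.ofReal ((1 - 2 * H) * beta (1 - 2 * H) (H + 1 / 2) / (2 * H) *
        ((t ^ (2 * H) + s ^ (2 * H) - (t - s) ^ (2 * H)) / 2)) := by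
  obtain ⟨hH0, hH1⟩ := hH
  have hα : 0 < 1 / 2 - H := by linarith
  have hB : 0 < beta (1 - 2 * H) (H + 1 / 2) := beta_pos (by linarith) (by positivity)
  have h2α : 2 * (1 / 2 - H) = 1 - 2 * H := by ring
  have hα' : 1 - (1 / 2 - H) = H + 1 / 2 := by ring
  have hparts := lintegral_rpow_mul_reducedKernel_mul_reducedKernel hα (by linarith) hst
  rw [h2α, hα', neg_sub, lintegral_Ioo_rpow_add_sub_rpow (by linarith) hs hst, sub_add_cancel,
    ← ENNReal.ofReal_mul (by positivity)] at hparts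
  rw [hparts]
  congr 1
  field_simp

lemma integral_KH_mul_KH_of_le (hH : H ∈ Ioo (0 : ℝ) (1 / 2)) (hs : 0 ≤ s) (hst : s ≤ t) :
    ∫ u in 0..s, KH H t u * KH H s u =
      (t ^ (2 * H) + s ^ (2 * H) - (t - s) ^ (2 * H)) / 2 := by
  have hH0 : 0 < H := hH.1
  have hα : 0 < 1 - 2 * H := by linarith [hH.2]
  have hB : 0 < beta (1 - 2 * H) (H + 1 / 2) := beta_pos hα (by positivity)
  have hmono : (t - s) ^ (2 * H) ≤ t ^ (2 * H) :=
    Real.rpow_le_rpow (sub_nonneg.2 hst) (by linarith) (by positivity)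
  have hcov : 0 ≤ (t ^ (2 * H) + s ^ (2 * H) - (t - s) ^ (2 * H)) / 2 := by
    linarith [Real.rpow_nonneg hs (2 * H)]
  set F : ℝ → ℝ≥0∞ := fun u => ENNReal.ofReal (u ^ (1 - 2 * H)) *
    (reducedKernel (1 / 2 - H) t u * reducedKernel (1 / 2 - H) s u)
  have hF : Measurable F := by fun_prop
  have hlint := lintegral_rpow_mul_reducedKernel_mul_reducedKernel_half_sub hH hs hst
  have hcongr : ∀ u ∈ Ioo 0 s, KH H t u * KH H s u = cH H ^ 2 * (F u).toReal := by
    intro u hu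
    have hu0 : 0 < u := hu.1
    rw [KH_eq_toReal_reducedKernel hH hu0 (hu.2.trans_le hst),
      KH_eq_toReal_reducedKernel hH hu0 hu.2, ENNReal.toReal_mul, ENNReal.toReal_mul,
      ENNReal.toReal_ofReal (by positivity),
      show 1 - 2 * H = (1 / 2 - H) + (1 / 2 - H) by ring, Real.rpow_add hu0]
    ring
  rw [integral_of_le hs, integral_Ioc_eq_integral_Ioo,
    setIntegral_congr_fun measurableSet_Ioo hcongr, MeasureTheory.integral_const_mul,
    integral_toReal hF.aemeasurable (ae_lt_top hF (by rw [hlint]; exact ENNReal.ofReal_ne_top)),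
    hlint, ENNReal.toReal_ofReal (mul_nonneg (by positivity) hcov), cH_sq hH]
  generalize beta (1 - 2 * H) (H + 1 / 2) = B at hB
  field_simp

end FractionalBrownianKernel

end FractionalKernel

/-- For `H ∈ (0,1/2)` and `s, t > 0`,
`∫_0^{min(s,t)} K_H(t,u) K_H(s,u) du = (1/2)(t^{2H} + s^{2H} − |t−s|^{2H})`. -/
theorem KH_integral_eq_covariance (H : ℝ) (hH : H ∈ Set.Ioo (0 : ℝ) (1 / 2))
    (s t : ℝ) (hs : 0 < s) (ht : 0 < t) :
    (∫ u in (0:ℝ)..(min s t), KH H t u * KH H s u) =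
      (t ^ (2 * H) + s ^ (2 * H) - |t - s| ^ (2 * H)) / 2 := by
  rcases le_total s t with hst | hts
  · rw [min_eq_left hst, abs_of_nonneg (sub_nonneg.2 hst)]
    exact FractionalKernel.integral_KH_mul_KH_of_le hH hs.le hst
  · rw [min_eq_right hts, abs_sub_comm, abs_of_nonneg (sub_nonneg.2 hts), add_comm (t ^ _)]
    simp_rw [mul_comm (KH H t _)]
    exact FractionalKernel.integral_KH_mul_KH_of_le hH ht.le hts
end

section
/- Let X = (X_1,…,X_n) be a centered jointly Gaussian random vector with covariance matrix Σ = ( E[X_j X_k] )_{1≤j,k≤n}. Then E[ |X_1| · |X_2| ⋯ |X_n| ] ≤ sqrt( perm(Σ) ), where the permanent of an n×n matrix A = (a_{ij}) is perm(A) := Σ_{π ∈ S_n} Π_{j=1}^n a_{j, π(j)}, the sum running over all permutations π of {1,…,n}. -/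
/-! Let `Y` be an independent copy of `X`, so that `Z = X + i Y` is a circularly symmetric complex
Gaussian vector. By AM-GM, `|X j| * |Y j| ≤ |Z j| ^ 2 / 2`, and taking expectations
`(E ∏ |X j|) ^ 2 ≤ 2 ^ (-n) * E ∏ |Z j| ^ 2`. Wick's formula for circularly symmetric vectors, in
which only the pairings of a `Z` with a conjugate survive, evaluates the right-hand side as the
permanent of the covariance matrix `Σ`.

For Wick's formula, write `Z = A W` with `A * Aᵀ = Σ` and `W` having independent standard complex
Gaussian coordinates. Expanding the product gives monomials `∏ W (f i) * conj (W (g i))`, whose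
expectations factor into `E [w ^ a * conj w ^ b] = 2 ^ a * a ! * δ_ab`; the case `a ≠ b` vanishes
by rotation invariance. So each monomial has expectation `2 ^ n` times the number of permutations
`σ` with `f ∘ σ = g`, which is its coefficient in the expansion of the permanent of `A * Aᵀ`.
-/

open MeasureTheory

/-- The permanent of a square matrix: `perm(A) = Σ_{π ∈ S_n} ∏_j A_{j, π(j)}`. -/
noncomputable def matrixPermanent {n : ℕ} (A : Matrix (Fin n) (Fin n) ℝ) : ℝ :=
  ∑ π : Equiv.Perm (Fin n), ∏ j, A j (π j)

open ProbabilityTheory Matrix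
open scoped ComplexConjugate MatrixOrder Nat NNReal

section Permutations

variable {ι κ : Type*} [Fintype ι] [DecidableEq κ]

lemma exists_perm_comp_eq_iff {f g : ι → κ} :
    (∃ σ : Equiv.Perm ι, f ∘ σ = g) ↔
      ∀ k, Fintype.card {i // f i = k} = Fintype.card {i // g i = k} := by
  refine ⟨?_, fun h ↦ ?_⟩
  · rintro ⟨σ, rfl⟩ k
    exact Fintype.card_congr (σ.symm.subtypeEquiv fun i ↦ by simp)
  · let fiberEquiv k : {i // g i = k} ≃ {i // f i = k} := Fintype.equivOfCardEq (h k).symm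
    refine ⟨((Equiv.sigmaFiberEquiv g).symm.trans (Equiv.sigmaCongrRight fiberEquiv)).trans
      (Equiv.sigmaFiberEquiv f), funext fun i ↦ ?_⟩
    exact (fiberEquiv (g i) ⟨i, rfl⟩).2

lemma card_perm_comp_eq [DecidableEq ι] [Fintype κ] (f g : ι → κ) :
    Fintype.card {σ : Equiv.Perm ι // f ∘ σ = g} =
      ∏ k, if Fintype.card {i // f i = k} = Fintype.card {i // g i = k}
        then (Fintype.card {i // f i = k})! else 0 := by
  by_cases h : ∀ k, Fintype.card {i // f i = k} = Fintype.card {i // g i = k}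
  · obtain ⟨τ, rfl⟩ := exists_perm_comp_eq_iff.2 h
    rw [Finset.prod_congr rfl fun k _ ↦ if_pos (h k), ← DomMulAct.stabilizer_card f]
    refine Fintype.card_congr ((Equiv.mulRight τ).subtypeEquiv fun σ ↦ ?_).symm
    rw [Equiv.coe_mulRight, Equiv.Perm.coe_mul, ← Function.comp_assoc,
      τ.surjective.injective_comp_right.eq_iff]
  · have : IsEmpty {σ : Equiv.Perm ι // f ∘ σ = g} :=
      ⟨fun σ ↦ h (exists_perm_comp_eq_iff.1 ⟨σ, σ.2⟩)⟩
    obtain ⟨k, hk⟩ := not_forall.1 h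
    rw [Fintype.card_eq_zero, Finset.prod_eq_zero (Finset.mem_univ k) (if_neg hk)]

lemma prod_comp_eq_prod_pow_card {M : Type*} [CommMonoid M] [Fintype κ] (f : ι → κ) (F : κ → M) :
    ∏ i, F (f i) = ∏ k, F k ^ Fintype.card {i // f i = k} := by
  simp [← Finset.prod_fiberwise' Finset.univ f F, Fintype.card_subtype]

end Permutations

lemma permanent_mul {ι κ R : Type*} [Fintype ι] [DecidableEq ι] [Fintype κ] [DecidableEq κ]
    [CommSemiring R] (A : Matrix ι κ R) (B : Matrix κ ι R) :
    (A * B).permanent = ∑ f : ι → κ, ∑ g : ι → κ,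
      (∏ i, A i (f i)) * (∏ i, B (g i) i) * Fintype.card {σ : Equiv.Perm ι // f ∘ σ = g} := by
  have expand (σ : Equiv.Perm ι) : ∏ i, (A * B) (σ i) i =
      ∑ f : ι → κ, (∏ i, A i (f i)) * ∏ i, B (f (σ i)) i := by
    simp_rw [Matrix.mul_apply, Finset.prod_univ_sum, Fintype.piFinset_univ,
      Finset.prod_mul_distrib]
    refine Fintype.sum_equiv (Equiv.arrowCongr σ (Equiv.refl κ)) _ _ fun f ↦ ?_
    simp [← Equiv.prod_comp σ fun i ↦ A i _]
  simp_rw [permanent, expand, Fintype.card_subtype, Finset.card_filter]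
  rw [Finset.sum_comm]
  refine Finset.sum_congr rfl fun f _ ↦ ?_
  simp_rw [Nat.cast_sum, Finset.mul_sum]
  rw [Finset.sum_comm]
  simp [Function.comp_def]

section ComplexStdGaussian

lemma measurePreserving_equivRealProd_stdGaussian :
    MeasurePreserving Complex.measurableEquivRealProd (stdGaussian ℂ)
      ((gaussianReal 0 1).prod (gaussianReal 0 1)) := by
  refine MeasurePreserving.symm Complex.measurableEquivRealProd.symm ⟨by fun_prop, ?_⟩
  rw [stdGaussian_eq_map_pi_orthonormalBasis Complex.orthonormalBasisOneI,
    ← (measurePreserving_finTwoArrow (gaussianReal 0 1)).map_eq,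
    Measure.map_map (by fun_prop) (by fun_prop)]
  congr 1
  ext x
  simp [Complex.measurableEquivRealProd, Complex.ext_iff]

lemma integral_stdGaussian_complex {E : Type*} [NormedAddCommGroup E] [NormedSpace ℝ E]
    (f : ℂ → E) :
    ∫ z, f z ∂stdGaussian ℂ = ∫ z, ((2 * Real.pi)⁻¹ * Real.exp (-2⁻¹ * ‖z‖ ^ 2)) • f z := by
  have density (p : ℝ × ℝ) : (gaussianPDF 0 1 p.1 * gaussianPDF 0 1 p.2).toReal =
      (2 * Real.pi)⁻¹ * Real.exp (-2⁻¹ * ‖Complex.measurableEquivRealProd.symm p‖ ^ 2) := by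
    have hsqrt : (√(2 * Real.pi))⁻¹ * (√(2 * Real.pi))⁻¹ = (2 * Real.pi)⁻¹ := by
      rw [← mul_inv, Real.mul_self_sqrt (by positivity)]
    have hexp : Real.exp (-2⁻¹ * ‖Complex.measurableEquivRealProd.symm p‖ ^ 2) =
        Real.exp (-p.1 ^ 2 / 2) * Real.exp (-p.2 ^ 2 / 2) := by
      rw [← Real.exp_add, ← Complex.normSq_eq_norm_sq, Complex.normSq_apply,
        Complex.measurableEquivRealProd_symm_apply]
      ring_nf
    simp only [ENNReal.toReal_mul, toReal_gaussianPDF, gaussianPDFReal, NNReal.coe_one, mul_one,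
      sub_zero, hexp, ← hsqrt]
    ring
  rw [← (measurePreserving_equivRealProd_stdGaussian.symm _).integral_comp',
    ← (Complex.volume_preserving_equiv_real_prod.symm _).integral_comp',
    gaussianReal_of_var_ne_zero _ one_ne_zero,
    prod_withDensity (measurable_gaussianPDF _ _) (measurable_gaussianPDF _ _),
    integral_withDensity_eq_integral_toReal_smul (by fun_prop)
      (ae_of_all _ fun _ ↦ ENNReal.mul_lt_top gaussianPDF_lt_top gaussianPDF_lt_top)]
  simp_rw [density]
  rfl

lemma integral_norm_pow_stdGaussian_complex (n : ℕ) :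
    ∫ z, ‖z‖ ^ (2 * n) ∂stdGaussian ℂ = 2 ^ n * n ! := by
  have h := Complex.integral_rpow_mul_exp_neg_mul_rpow (p := 2) (q := (2 * n : ℕ)) (b := 2⁻¹)
    one_le_two (by linarith [(2 * n).cast_nonneg (α := ℝ)]) (by norm_num)
  have hexponent : (((2 * n : ℕ) : ℝ) + 2) / 2 = (n + 1 : ℕ) := by push_cast; ring
  simp_rw [neg_div, hexponent, Real.rpow_natCast, Real.rpow_ofNat] at h
  rw [Real.rpow_neg (by norm_num), Real.rpow_natCast, inv_pow, inv_inv, Nat.cast_add_one,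
    Real.Gamma_nat_eq_factorial] at h
  rw [integral_stdGaussian_complex]
  simp_rw [smul_eq_mul, mul_assoc, integral_const_mul, mul_comm (Real.exp _), h]
  field_simp
  ring

lemma integral_pow_mul_conj_pow_stdGaussian_complex_of_ne {a b : ℕ} (h : a ≠ b) :
    ∫ z, z ^ a * conj z ^ b ∂stdGaussian ℂ = 0 := by
  have hab : (a : ℂ) - b ≠ 0 := sub_ne_zero.2 (by exact_mod_cast h)
  let c : Circle := .exp (Real.pi / (a - b))
  have hc : (c : ℂ) ^ a * conj (c : ℂ) ^ b = -1 := by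
    rw [Circle.coe_exp, ← Complex.exp_conj, ← Complex.exp_nat_mul, ← Complex.exp_nat_mul,
      ← Complex.exp_add, ← Complex.exp_pi_mul_I]
    congr 1
    simp only [Complex.ofReal_div, Complex.ofReal_sub, Complex.ofReal_natCast, map_mul, map_div₀,
      Complex.conj_ofReal, map_sub, map_natCast, Complex.conj_I, mul_neg]
    field_simp
    ring
  refine self_eq_neg.1 ?_
  calc ∫ z, z ^ a * conj z ^ b ∂stdGaussian ℂ
    _ = ∫ z, z ^ a * conj z ^ b ∂(stdGaussian ℂ).map (rotation c) := by rw [stdGaussian_map]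
    _ = ∫ z, (c * z) ^ a * conj (c * z) ^ b ∂stdGaussian ℂ := by
      rw [integral_map (by fun_prop) (by fun_prop)]
      simp only [rotation_apply]
    _ = ∫ z, ((c : ℂ) ^ a * conj (c : ℂ) ^ b) * (z ^ a * conj z ^ b) ∂stdGaussian ℂ := by
      congr with z
      rw [map_mul]
      ring
    _ = -∫ z, z ^ a * conj z ^ b ∂stdGaussian ℂ := by
      rw [integral_const_mul, hc, neg_one_mul]

lemma integral_pow_mul_conj_pow_stdGaussian_complex (a b : ℕ) :
    ∫ z, z ^ a * conj z ^ b ∂stdGaussian ℂ = if a = b then 2 ^ a * (a ! : ℂ) else 0 := by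
  split_ifs with h
  · subst h
    have hnorm (z : ℂ) : z ^ a * conj z ^ a = (‖z‖ ^ (2 * a) : ℝ) := by
      rw [← mul_pow, Complex.mul_conj, Complex.normSq_eq_norm_sq, ← Complex.ofReal_pow, pow_mul]
    simp_rw [hnorm]
    rw [integral_complex_ofReal, integral_norm_pow_stdGaussian_complex]
    push_cast
    rfl
  · exact integral_pow_mul_conj_pow_stdGaussian_complex_of_ne h

lemma integrable_pow_mul_conj_pow_stdGaussian_complex (a b : ℕ) :
    Integrable (fun z ↦ z ^ a * conj z ^ b) (stdGaussian ℂ) := by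
  have hid : MemLp id (a + b : ℕ) (stdGaussian ℂ) :=
    IsGaussian.memLp_id _ _ (ENNReal.natCast_ne_top _)
  refine hid.integrable_norm_pow'.mono' (by fun_prop) (ae_of_all _ fun z ↦ ?_)
  simp [pow_add]

end ComplexStdGaussian

section Wick

variable {ι κ : Type*} [Fintype ι] [Fintype κ]

lemma prod_mul_conj_eq_prod_pow [DecidableEq κ] (f g : ι → κ) (z : κ → ℂ) :
    ∏ i, z (f i) * conj (z (g i)) =
      ∏ k, z k ^ Fintype.card {i // f i = k} * conj (z k) ^ Fintype.card {i // g i = k} := by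
  rw [Finset.prod_mul_distrib, Finset.prod_mul_distrib, prod_comp_eq_prod_pow_card f z,
    prod_comp_eq_prod_pow_card g fun k ↦ conj (z k)]

lemma integrable_prod_mul_conj_pi_stdGaussian (f g : ι → κ) :
    Integrable (fun z : κ → ℂ ↦ ∏ i, z (f i) * conj (z (g i)))
      (Measure.pi fun _ ↦ stdGaussian ℂ) := by
  classical
  simp_rw [prod_mul_conj_eq_prod_pow]
  exact Integrable.fintype_prod fun k ↦ integrable_pow_mul_conj_pow_stdGaussian_complex _ _

lemma integral_prod_mul_conj_pi_stdGaussian [DecidableEq ι] [DecidableEq κ] (f g : ι → κ) :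
    ∫ z : κ → ℂ, ∏ i, z (f i) * conj (z (g i)) ∂Measure.pi (fun _ ↦ stdGaussian ℂ) =
      2 ^ Fintype.card ι * Fintype.card {σ : Equiv.Perm ι // f ∘ σ = g} := by
  have hpow : (2 : ℂ) ^ Fintype.card ι = ∏ k, 2 ^ Fintype.card {i // f i = k} := by
    rw [← prod_comp_eq_prod_pow_card f fun _ ↦ (2 : ℂ), Finset.prod_const, Finset.card_univ]
  simp_rw [prod_mul_conj_eq_prod_pow]
  rw [integral_fintype_prod_eq_prod fun k (w : ℂ) ↦
    w ^ Fintype.card {i // f i = k} * conj w ^ Fintype.card {i // g i = k}]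
  simp_rw [integral_pow_mul_conj_pow_stdGaussian_complex, card_perm_comp_eq, hpow, Nat.cast_prod,
    ← Finset.prod_mul_distrib]
  refine Finset.prod_congr rfl fun k _ ↦ ?_
  split_ifs <;> simp

lemma prod_mulVec_mul_conj_mulVec [DecidableEq ι] (A B : Matrix ι κ ℂ) (z : κ → ℂ) :
    ∏ i, (A *ᵥ z) i * conj ((B *ᵥ z) i) =
      ∑ f : ι → κ, ∑ g : ι → κ, (∏ i, A i (f i)) * (∏ i, Bᴴ (g i) i) *
        ∏ i, z (f i) * conj (z (g i)) := by
  simp_rw [mulVec, dotProduct, map_sum, map_mul, Finset.prod_mul_distrib, Finset.prod_univ_sum,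
    Fintype.piFinset_univ, Finset.sum_mul_sum, Finset.prod_mul_distrib, mul_mul_mul_comm]
  rfl

lemma integrable_prod_mulVec_mul_conj_mulVec (A B : Matrix ι κ ℂ) :
    Integrable (fun z : κ → ℂ ↦ ∏ i, (A *ᵥ z) i * conj ((B *ᵥ z) i))
      (Measure.pi fun _ ↦ stdGaussian ℂ) := by
  classical
  simp_rw [prod_mulVec_mul_conj_mulVec]
  exact integrable_finsetSum _ fun f _ ↦ integrable_finsetSum _ fun g _ ↦
    (integrable_prod_mul_conj_pi_stdGaussian f g).const_mul _

theorem integral_prod_mulVec_mul_conj_mulVec [DecidableEq ι] (A B : Matrix ι κ ℂ) :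
    ∫ z : κ → ℂ, ∏ i, (A *ᵥ z) i * conj ((B *ᵥ z) i) ∂Measure.pi (fun _ ↦ stdGaussian ℂ) =
      2 ^ Fintype.card ι * (A * Bᴴ).permanent := by
  classical
  have hint (f g : ι → κ) := (integrable_prod_mul_conj_pi_stdGaussian f g).const_mul
    ((∏ i, A i (f i)) * ∏ i, Bᴴ (g i) i)
  simp_rw [prod_mulVec_mul_conj_mulVec]
  rw [integral_finsetSum _ fun f _ ↦ integrable_finsetSum _ fun g _ ↦ hint f g, permanent_mul,
    Finset.mul_sum]
  refine Finset.sum_congr rfl fun f _ ↦ ?_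
  rw [integral_finsetSum _ fun g _ ↦ hint f g, Finset.mul_sum]
  refine Finset.sum_congr rfl fun g _ ↦ ?_
  rw [integral_const_mul, integral_prod_mul_conj_pi_stdGaussian]
  ring

lemma integrable_prod_normSq_mulVec (A : Matrix ι κ ℂ) :
    Integrable (fun z : κ → ℂ ↦ ∏ i, Complex.normSq ((A *ᵥ z) i))
      (Measure.pi fun _ ↦ stdGaussian ℂ) := by
  have h := (integrable_prod_mulVec_mul_conj_mulVec A A).re
  simp_rw [Complex.mul_conj, ← Complex.ofReal_prod] at h
  exact h

lemma integral_prod_normSq_mulVec_map_ofReal [DecidableEq ι] (A : Matrix ι κ ℝ) :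
    ∫ z : κ → ℂ, ∏ i, Complex.normSq ((A.map Complex.ofReal *ᵥ z) i)
        ∂Measure.pi (fun _ ↦ stdGaussian ℂ) =
      2 ^ Fintype.card ι * (A * Aᵀ).permanent := by
  have hgram : A.map Complex.ofReal * (A.map Complex.ofReal)ᴴ = (A * Aᵀ).map Complex.ofReal := by
    ext i j
    simp [Matrix.mul_apply]
  have h := integral_prod_mulVec_mul_conj_mulVec (A.map Complex.ofReal) (A.map Complex.ofReal)
  simp_rw [Complex.mul_conj, ← Complex.ofReal_prod, integral_complex_ofReal, hgram] at h
  apply Complex.ofReal_injective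
  simpa [permanent] using h

end Wick

section AbsoluteProduct

variable {ι κ : Type*} [Fintype ι] [Fintype κ]

lemma measurePreserving_re_im_pi_stdGaussian :
    MeasurePreserving (fun z : κ → ℂ ↦ (fun k ↦ (z k).re, fun k ↦ (z k).im))
      (Measure.pi fun _ ↦ stdGaussian ℂ)
      ((Measure.pi fun _ ↦ gaussianReal 0 1).prod (Measure.pi fun _ ↦ gaussianReal 0 1)) :=
  (measurePreserving_arrowProdEquivProdArrow ℝ ℝ κ _ _).comp
    (measurePreserving_pi _ _ fun _ ↦ measurePreserving_equivRealProd_stdGaussian)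

lemma normSq_mulVec_map_ofReal {ι κ : Type*} [Fintype κ] (A : Matrix ι κ ℝ) (z : κ → ℂ) (i : ι) :
    Complex.normSq ((A.map Complex.ofReal *ᵥ z) i) =
      (A *ᵥ fun k ↦ (z k).re) i ^ 2 + (A *ᵥ fun k ↦ (z k).im) i ^ 2 := by
  simp [Complex.normSq_apply, mulVec, dotProduct, sq]

lemma prod_abs_mul_prod_abs_le (x y : ι → ℝ) :
    (∏ i, |x i|) * ∏ i, |y i| ≤ (2 ^ Fintype.card ι)⁻¹ * ∏ i, (x i ^ 2 + y i ^ 2) := by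
  rw [← inv_pow, Fintype.card, ← Finset.prod_const, ← Finset.prod_mul_distrib,
    ← Finset.prod_mul_distrib]
  refine Finset.prod_le_prod (fun _ _ ↦ by positivity) fun i _ ↦ ?_
  have := two_mul_le_add_sq |x i| |y i|
  rw [sq_abs, sq_abs] at this
  linarith

theorem sq_integral_prod_abs_mulVec_le_permanent [DecidableEq ι] (A : Matrix ι κ ℝ) :
    (∫ x, ∏ i, |(A *ᵥ x) i| ∂Measure.pi fun _ ↦ gaussianReal 0 1) ^ 2 ≤
      (A * Aᵀ).permanent := by
  set γ : Measure (κ → ℝ) := Measure.pi fun _ ↦ gaussianReal 0 1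
  set γc : Measure (κ → ℂ) := Measure.pi fun _ ↦ stdGaussian ℂ
  calc (∫ x, ∏ i, |(A *ᵥ x) i| ∂γ) ^ 2
    _ = ∫ p, (∏ i, |(A *ᵥ p.1) i|) * ∏ i, |(A *ᵥ p.2) i| ∂γ.prod γ := by
      rw [sq, integral_prod_mul (fun x ↦ ∏ i, |(A *ᵥ x) i|) fun x ↦ ∏ i, |(A *ᵥ x) i|]
    _ = ∫ z, (∏ i, |(A *ᵥ fun k ↦ (z k).re) i|) * ∏ i, |(A *ᵥ fun k ↦ (z k).im) i| ∂γc := by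
      rw [← measurePreserving_re_im_pi_stdGaussian.map_eq, integral_map (by fun_prop) (by fun_prop)]
    _ ≤ ∫ z, (2 ^ Fintype.card ι)⁻¹ * ∏ i, Complex.normSq ((A.map Complex.ofReal *ᵥ z) i) ∂γc := by
      refine integral_mono_of_nonneg (ae_of_all _ fun z ↦ by positivity)
        ((integrable_prod_normSq_mulVec _).const_mul _) (ae_of_all _ fun z ↦ ?_)
      simp_rw [normSq_mulVec_map_ofReal]
      exact prod_abs_mul_prod_abs_le _ _
    _ = (A * Aᵀ).permanent := by
      rw [integral_const_mul, integral_prod_normSq_mulVec_map_ofReal,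
        inv_mul_cancel_left₀ (by positivity)]

theorem integral_prod_abs_multivariateGaussian_le [DecidableEq ι] {S : Matrix ι ι ℝ}
    (hS : S.PosSemidef) :
    ∫ x, ∏ i, |x i| ∂multivariateGaussian 0 S ≤ √S.permanent := by
  have hsqrt : CFC.sqrt S * (CFC.sqrt S)ᵀ = S := by
    rw [← conjTranspose_eq_transpose_of_trivial,
      (CFC.sqrt_nonneg S).posSemidef.isHermitian.eq, CFC.sqrt_mul_sqrt_self S hS.nonneg]
  refine Real.le_sqrt_of_sq_le ?_
  have h := sq_integral_prod_abs_mulVec_le_permanent (CFC.sqrt S)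
  rw [hsqrt] at h
  rw [multivariateGaussian, ← map_pi_eq_stdGaussian, integral_map (by fun_prop) (by fun_prop),
    integral_map (by fun_prop) (by fun_prop)]
  simpa using h

end AbsoluteProduct

lemma posSemidef_of_eq_integral_mul {Ω ι : Type*} [MeasurableSpace Ω] [Finite ι] {P : Measure Ω}
    {X : ι → Ω → ℝ} {S : Matrix ι ι ℝ} (hX : ∀ i, MemLp (X i) 2 P)
    (hS : ∀ i j, S i j = ∫ ω, X i ω * X j ω ∂P) : S.PosSemidef := by
  convert! posSemidef_gram ℝ fun i ↦ (hX i).toLp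
  ext i j
  rw [hS, gram_apply, L2.inner_def]
  refine integral_congr_ae ?_
  filter_upwards [(hX i).coeFn_toLp, (hX j).coeFn_toLp] with ω hi hj
  simp [hi, hj, mul_comm]

lemma hasGaussianLaw_of_map_sum_eq_gaussianReal {Ω ι : Type*} [MeasurableSpace Ω] [Fintype ι]
    {P : Measure Ω} {X : ι → Ω → ℝ} {m : (ι → ℝ) → ℝ} {v : (ι → ℝ) → ℝ≥0}
    (hGauss : ∀ c : ι → ℝ, P.map (fun ω ↦ ∑ i, c i * X i ω) = gaussianReal (m c) (v c)) (i : ι) :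
    HasGaussianLaw (X i) P := by
  classical
  have h := hGauss (Pi.single i 1)
  simp only [Pi.single_apply, ite_mul, one_mul, zero_mul, Finset.sum_ite_eq', Finset.mem_univ,
    if_true] at h
  exact ⟨by rw [h]; infer_instance⟩

lemma hasLaw_toLp_multivariateGaussian {Ω ι : Type*} [MeasurableSpace Ω] [Fintype ι]
    [DecidableEq ι] {P : Measure Ω} {X : ι → Ω → ℝ} {S : Matrix ι ι ℝ} (hS : S.PosSemidef)
    (hGauss : ∀ c : ι → ℝ, P.map (fun ω ↦ ∑ i, c i * X i ω) =
      gaussianReal 0 (∑ i, ∑ j, c i * c j * S i j).toNNReal) :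
    HasLaw (fun ω ↦ WithLp.toLp 2 fun i ↦ X i ω) (multivariateGaussian 0 S) P := by
  have hX (i : ι) : AEMeasurable (X i) P :=
    (hasGaussianLaw_of_map_sum_eq_gaussianReal hGauss i).aemeasurable
  have hm : AEMeasurable (fun ω ↦ WithLp.toLp 2 fun i ↦ X i ω) P := by fun_prop
  have : IsProbabilityMeasure (P.map fun ω ↦ ∑ i, (0 : ι → ℝ) i * X i ω) := by
    rw [hGauss]; infer_instance
  have : IsProbabilityMeasure P :=
    P.isProbabilityMeasure_of_map fun ω ↦ ∑ i, (0 : ι → ℝ) i * X i ω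
  refine ⟨hm, Measure.ext_of_charFun (funext fun t ↦ ?_)⟩
  have hquad : ∑ i, ∑ j, t i * t j * S i j = t.ofLp ⬝ᵥ S *ᵥ t.ofLp := by
    simp only [dotProduct, mulVec, Finset.mul_sum, mul_comm, mul_left_comm]
  have hnonneg : 0 ≤ t.ofLp ⬝ᵥ S *ᵥ t.ofLp := by simpa using hS.dotProduct_mulVec_nonneg t.ofLp
  calc charFun (P.map fun ω ↦ WithLp.toLp 2 fun i ↦ X i ω) t
    _ = charFun (P.map fun ω ↦ ∑ i, t i * X i ω) 1 := by
      rw [charFun_eq_charFunDual_toDualMap, charFunDual_eq_charFun_map_one,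
        AEMeasurable.map_map_of_aemeasurable (by fun_prop) hm]
      congr! 2
      ext ω
      simp [PiLp.inner_apply, mul_comm]
    _ = charFun (multivariateGaussian 0 S) t := by
      rw [hGauss, charFun_gaussianReal, charFun_multivariateGaussian hS, hquad,
        Real.coe_toNNReal _ hnonneg]
      simp

lemma matrixPermanent_eq_permanent {n : ℕ} (A : Matrix (Fin n) (Fin n) ℝ) :
    matrixPermanent A = A.permanent := by
  rw [← permanent_transpose]
  rfl

/-- **Li–Wei inequality.** If `(X_1,…,X_n)` is a centered jointly Gaussian vector
(i.e. every linear combination `Σ c_i X_i` has a centered Gaussian law with the variance induced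
by the covariance matrix `Σ`), then `E[|X_1| ⋯ |X_n|] ≤ √(perm Σ)`. -/
theorem gaussian_abs_prod_le_sqrt_permanent
    {Ω : Type*} [MeasurableSpace Ω] (P : Measure Ω) [IsProbabilityMeasure P]
    (n : ℕ) (hn : 1 ≤ n) (X : Fin n → Ω → ℝ) (hX : ∀ i, Measurable (X i))
    (Cov : Matrix (Fin n) (Fin n) ℝ)
    (hcov : ∀ i j, Cov i j = ∫ ω, X i ω * X j ω ∂P)
    (hGauss : ∀ c : Fin n → ℝ,
      P.map (fun ω => ∑ i, c i * X i ω) =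
        ProbabilityTheory.gaussianReal 0
          (Real.toNNReal (∑ i, ∑ j, c i * c j * Cov i j))) :
    (∫ ω, ∏ i, |X i ω| ∂P) ≤ Real.sqrt (matrixPermanent Cov) := by
  have hpsd : Cov.PosSemidef := posSemidef_of_eq_integral_mul
    (fun i ↦ (hasGaussianLaw_of_map_sum_eq_gaussianReal hGauss i).memLp_two) hcov
  have hlaw := hasLaw_toLp_multivariateGaussian hpsd hGauss
  calc ∫ ω, ∏ i, |X i ω| ∂P
    _ = ∫ x, ∏ i, |x i| ∂multivariateGaussian 0 Cov :=
      hlaw.integral_comp (f := fun x : EuclideanSpace ℝ (Fin n) ↦ ∏ i, |x i|) (by fun_prop)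
    _ ≤ √(matrixPermanent Cov) := by
      rw [matrixPermanent_eq_permanent]
      exact integral_prod_abs_multivariateGaussian_le hpsd
end
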